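/- Let J ⊆ ℝ be an interval with base point s₀ ∈ J, and let σ : J → ℂ be a C¹ curve with σ(y) ≠ 0 and Im(conj(σ(y))·σ'(y)) > 0 for all y ∈ J (so that β_σ is strictly increasing). Define F̌_d : ℝ × J → ℂ² by F̌_d(x,y) := (x·σ(y), (1/2)(|σ(y)|² − x²) + i·β_σ(y)). Then F̌_d is injective, and F̌_d(−x, y) = (−(F̌_d)₁(x,y), (F̌_d)₂(x,y)) for all (x,y), i.e. F̌_d intertwines the reflection x ↦ −x of the domain with the C₂-action (z₁, z₂) ↦ (−z₁, z₂) on ℂ². (This is the key injectivity underlying the embeddedness of the SO(m−1)-invariant translating soliton L_{(d)}, where σ is the profile curve of an Anciaux shrinker.) -/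

import Mathlib

open Complex

/-- The primitive `β_σ` of the pullback of the Liouville form by a curve `σ`. -/
noncomputable def beta (σ σ' : ℝ → ℂ) (s₀ s : ℝ) : ℝ :=
  ∫ t in s₀..s, ((starRingEnd ℂ) (σ t) * σ' t).im

/-- The profile surface `F̌_d(x,y) = (x·σ(y), (1/2)(|σ(y)|² − x²) + i·β_σ(y))`. -/
noncomputable def Fd (σ σ' : ℝ → ℂ) (s₀ : ℝ) (x y : ℝ) : ℂ × ℂ :=
  ((x : ℂ) * σ y,
    ((1 / 2 * (‖σ y‖ ^ 2 - x ^ 2) : ℝ) : ℂ)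
      + Complex.I * ((beta σ σ' s₀ y : ℝ) : ℂ))

/-- If `σ` is a nonvanishing C¹ curve on an interval `J` with
`Im(conj(σ)·σ') > 0` on `J` (so `β_σ` is strictly increasing), then `F̌_d` is injective
on `ℝ × J`, and intertwines the reflection `x ↦ −x` of the domain with the `C₂`-action
`(z₁, z₂) ↦ (−z₁, z₂)` on `ℂ²`. This is the key injectivity underlying the embeddedness
of the `SO(m−1)`-invariant translating soliton `L_{(d)}`. -/
theorem Fd_injective_and_C2_equivariant
    (J : Set ℝ) (hJ : J.OrdConnected) (s₀ : ℝ) (hs₀ : s₀ ∈ J)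
    (σ σ' : ℝ → ℂ)
    (hσ : ∀ y ∈ J, HasDerivAt σ (σ' y) y)
    (hσ'c : ContinuousOn σ' J)
    (hσ0 : ∀ y ∈ J, σ y ≠ 0)
    (hpos : ∀ y ∈ J, 0 < ((starRingEnd ℂ) (σ y) * σ' y).im) :
    Set.InjOn (fun p : ℝ × ℝ => Fd σ σ' s₀ p.1 p.2) ((Set.univ : Set ℝ) ×ˢ J) ∧
    (∀ x y : ℝ, Fd σ σ' s₀ (-x) y = (-(Fd σ σ' s₀ x y).1, (Fd σ σ' s₀ x y).2)) := by
  have hcont : ContinuousOn (fun t => ((starRingEnd ℂ) (σ t) * σ' t).im) J := by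
    have h1 : ContinuousOn σ J := fun y hy => (hσ y hy).continuousAt.continuousWithinAt
    exact Complex.continuous_im.comp_continuousOn
      ((Complex.continuous_conj.comp_continuousOn h1).mul hσ'c)
  have hint : ∀ a ∈ J, ∀ b ∈ J, IntervalIntegrable
      (fun t => ((starRingEnd ℂ) (σ t) * σ' t).im) MeasureTheory.volume a b := by
    intro a ha b hb
    exact (hcont.mono (hJ.uIcc_subset ha hb)).intervalIntegrable
  have hmono : StrictMonoOn (beta σ σ' s₀) J := by
    intro a ha b hb hab
    have h1 := intervalIntegral.integral_interval_sub_left (hint s₀ hs₀ b hb) (hint s₀ hs₀ a ha)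
    have h2 : 0 < ∫ t in a..b, ((starRingEnd ℂ) (σ t) * σ' t).im :=
      intervalIntegral.intervalIntegral_pos_of_pos_on (hint a ha b hb)
        (fun t ht => hpos t (hJ.out ha hb ⟨ht.1.le, ht.2.le⟩)) hab
    unfold beta
    linarith
  refine ⟨?_, ?_⟩
  · rintro ⟨x, y⟩ ⟨-, hy⟩ ⟨x', y'⟩ ⟨-, hy'⟩ h
    simp only [Fd, Prod.mk.injEq] at h hy hy'
    obtain ⟨h1, h2⟩ := h
    have h3 := congrArg Complex.im h2
    simp only [Complex.add_im, Complex.ofReal_im, Complex.I_mul_im, Complex.ofReal_re,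
      zero_add] at h3
    have hyy : y = y' := hmono.injOn hy hy' h3
    subst hyy
    have h4 := mul_right_cancel₀ (hσ0 y hy) h1
    rw [Complex.ofReal_inj.mp h4]
  · intro x y
    simp [Fd]
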